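/- There exist R > 0 and a vector field V : Q̄ → ℝ³ with V ∈ C¹([0,T]; W^{1,2}(Ω_t;ℝ³) ∩ W^{1,∞}(Ω_t;ℝ³)) such that div_x V(t,·) = 0 in Ω_t for every t ∈ [0,T], V(t,·) = −ν_t n on Γ_t for every t ∈ [0,T], and V(t,x) = 0 for all t ∈ [0,T] and all |x| > R. -/

import Mathlib

open MeasureTheory Set Function Filter
open scoped RealInnerProductSpace ENNReal Topology

noncomputable section

abbrev E3 : Type := EuclideanSpace ℝ (Fin 3)

/-- the `i`-th coordinate vector -/
def e3 (i : Fin 3) : E3 := EuclideanSpace.single i (1:ℝ)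

/-- partial derivative -/
def pd (f : E3 → ℝ) (i : Fin 3) (x : E3) : ℝ := fderiv ℝ f x (e3 i)

/-- gradient -/
def grd (f : E3 → ℝ) (x : E3) : E3 := ∑ i, pd f i x • e3 i

/-- divergence -/
def dvg (u : E3 → E3) (x : E3) : ℝ := ∑ i, fderiv ℝ u x (e3 i) i

/-- velocity gradient matrix `(∇u)ᵢⱼ = ∂ⱼuᵢ` -/
def gradm (u : E3 → E3) (x : E3) : Matrix (Fin 3) (Fin 3) ℝ :=
  Matrix.of fun i j => fderiv ℝ u x (e3 j) i

/-- Frobenius product of matrices `A : B` -/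
def mdd (A B : Matrix (Fin 3) (Fin 3) ℝ) : ℝ := ∑ i, ∑ j, A i j * B i j

/-- tensor product `u ⊗ v` -/
def tens (u v : E3) : Matrix (Fin 3) (Fin 3) ℝ := Matrix.of fun i j => u i * v j

/-- the viscous stress tensor `S(M) = μ(M + Mᵀ - (2/3) tr M I) + η tr M I` -/
def Stens (μ η : ℝ) (M : Matrix (Fin 3) (Fin 3) ℝ) : Matrix (Fin 3) (Fin 3) ℝ :=
  μ • (M + M.transpose - ((2/3) * M.trace) • (1 : Matrix (Fin 3) (Fin 3) ℝ))
    + (η * M.trace) • (1 : Matrix (Fin 3) (Fin 3) ℝ)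

/-- Laplacian -/
def lapl (f : E3 → ℝ) (x : E3) : ℝ :=
  ∑ i, fderiv ℝ (fun y => fderiv ℝ f y (e3 i)) x (e3 i)

/-- Hessian matrix -/
def hess (f : E3 → ℝ) (x : E3) : Matrix (Fin 3) (Fin 3) ℝ :=
  Matrix.of fun i j => fderiv ℝ (fun y => fderiv ℝ f y (e3 j)) x (e3 i)

/-- the moving exterior domain `Ω_t = ℝ³ \ Σ_t`, where `Σ_t = {x | F(x - m t) < 0}` -/
def Dom (F : E3 → ℝ) (m : ℝ → E3) (t : ℝ) : Set E3 := {x | 0 ≤ F (x - m t)}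

/-- outer unit normal of the fluid domain (pointing into the rigid body) -/
def nvec (F : E3 → ℝ) (m : ℝ → E3) (t : ℝ) (x : E3) : E3 :=
  -(‖grd F (x - m t)‖⁻¹ • grd F (x - m t))

/-- `Σ₀` is a bounded domain of class `C²`, described by a regular value of a `C²` function. -/
structure DomainHyp (F : E3 → ℝ) : Prop where
  smooth : ContDiff ℝ 2 F
  bounded : Bornology.IsBounded {x : E3 | F x < 0}
  nonempty : {x : E3 | F x < 0}.Nonempty
  nondeg : ∀ x, F x = 0 → grd F x ≠ 0

/-- hypotheses on the barotropic pressure -/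
structure PressureHyp (p : ℝ → ℝ) (γ : ℝ) : Prop where
  gamma_gt : 3/2 < γ
  cont : ContinuousOn p (Ici 0)
  diff : ∀ r : ℝ, 0 < r → DifferentiableAt ℝ p r
  zero : p 0 = 0
  pos : ∀ r : ℝ, 0 < r → 0 < deriv p r
  growth : ∃ pinf : ℝ, 0 < pinf ∧
    Tendsto (fun r : ℝ => deriv p r / r ^ (γ - 1)) atTop (𝓝 pinf)

/-- the pressure potential `P(ϱ) = ϱ ∫₁^ϱ p(z)/z² dz` -/
def Pfun (p : ℝ → ℝ) (r : ℝ) : ℝ := r * ∫ z in (1:ℝ)..r, p z / z ^ 2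

/-- relative energy `H(ϱ) = P(ϱ) - P'(ϱ̄)(ϱ - ϱ̄) - P(ϱ̄)` -/
def Hfun (p : ℝ → ℝ) (ϱb r : ℝ) : ℝ :=
  Pfun p r - deriv (Pfun p) ϱb * (r - ϱb) - Pfun p ϱb

/-- the solenoidal corrector field of Lemma 2.1 -/
structure IsCorrector (T : ℝ) (m : ℝ → E3) (F : E3 → ℝ) (R : ℝ) (V : ℝ → E3 → E3) : Prop where
  smooth : ContDiff ℝ 1 ↿V
  sobolev : ∀ t ∈ Icc 0 T,
      eLpNorm (V t) 2 (volume.restrict (Dom F m t)) < ⊤ ∧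
      (∀ i j, eLpNorm (fun x => gradm (V t) x i j) 2 (volume.restrict (Dom F m t)) < ⊤) ∧
      eLpNorm (V t) ⊤ (volume.restrict (Dom F m t)) < ⊤ ∧
      (∀ i j, eLpNorm (fun x => gradm (V t) x i j) ⊤ (volume.restrict (Dom F m t)) < ⊤)
  divfree : ∀ t ∈ Icc 0 T, ∀ x ∈ Dom F m t, dvg (V t) x = 0
  bc : ∀ t ∈ Icc 0 T, ∀ x, F (x - m t) = 0 →
      V t x = ⟪deriv m t, nvec F m t x⟫ • nvec F m t x
  supp : ∀ t ∈ Icc 0 T, ∀ x : E3, R < ‖x‖ → V t x = 0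

/-- test vector fields tangential to the lateral boundary `Γ` -/
def Tangential (T : ℝ) (F : E3 → ℝ) (m : ℝ → E3) (φ : ℝ → E3 → E3) : Prop :=
  ∀ t ∈ Icc 0 T, ∀ x, F (x - m t) = 0 → ⟪φ t x, grd F (x - m t)⟫ = 0

/-- Definition 2.2 : finite-energy weak solution of the scaled compressible
Navier–Stokes system on the moving exterior domain. -/
structure IsWeakSolution (p : ℝ → ℝ) (γ μ η ϱb ε T : ℝ) (m : ℝ → E3) (F : E3 → ℝ)
    (V : ℝ → E3 → E3) (ϱ0 : E3 → ℝ) (u0 : E3 → E3)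
    (ϱ : ℝ → E3 → ℝ) (u : ℝ → E3 → E3) : Prop where
  nonneg : ∀ t x, 0 ≤ ϱ t x
  dens_int : ∃ C : ℝ≥0∞, C < ⊤ ∧ ∀ᵐ t ∂(volume.restrict (Ioc 0 T)), ∃ g h : E3 → ℝ,
      (∀ x, ϱ t x - ϱb = g x + h x) ∧
      eLpNorm g 2 (volume.restrict (Dom F m t)) ≤ C ∧
      eLpNorm h (ENNReal.ofReal γ) (volume.restrict (Dom F m t)) ≤ C
  vel_int : (∫⁻ t in Ioc 0 T,
      ((eLpNorm (u t) 2 (volume.restrict (Dom F m t))) ^ 2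
        + ∑ i, ∑ j,
          (eLpNorm (fun x => gradm (u t) x i j) 2 (volume.restrict (Dom F m t))) ^ 2)) < ⊤
  continuity : ∀ t ∈ Icc 0 T, ∀ φ : ℝ → E3 → ℝ, ContDiff ℝ (⊤ : ℕ∞) ↿φ → HasCompactSupport ↿φ →
    (∀ x ∈ Dom F m T, φ T x = 0) →
    ∀ b : ℝ → ℝ, ContDiff ℝ 1 b → b 0 = 0 → (∃ M, ∀ r, M ≤ r → deriv b r = 0) →
    ((∫ x in Dom F m t, (ϱ t x + b (ϱ t x)) * φ t x)
      - ∫ x in Dom F m 0, (ϱ0 x + b (ϱ0 x)) * φ 0 x)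
    = ∫ s in Ioc 0 t, ∫ x in Dom F m s,
        ((ϱ s x + b (ϱ s x)) * deriv (fun τ => φ τ x) s
         + (ϱ s x + b (ϱ s x)) * ⟪u s x, grd (φ s) x⟫
         + (b (ϱ s x) - deriv b (ϱ s x) * ϱ s x) * dvg (u s) x * φ s x)
  momentum : ∀ t ∈ Icc 0 T, ∀ φ : ℝ → E3 → E3, ContDiff ℝ (⊤ : ℕ∞) ↿φ → HasCompactSupport ↿φ →
    Tangential T F m φ →
    ((∫ x in Dom F m t, ϱ t x * ⟪u t x, φ t x⟫)
      - ∫ x in Dom F m 0, ϱ0 x * ⟪u0 x, φ 0 x⟫)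
    = ∫ s in Ioc 0 t, ∫ x in Dom F m s,
        (ϱ s x * ⟪u s x, deriv (fun τ => φ τ x) s⟫
         + ϱ s x * mdd (tens (u s x) (u s x)) (gradm (φ s) x)
         + ε⁻¹ * ε⁻¹ * p (ϱ s x) * dvg (φ s) x
         - mdd (Stens μ η (gradm (u s) x)) (gradm (φ s) x))
  energy : ∀ t ∈ Icc 0 T,
    ((∫ x in Dom F m t, ((1:ℝ)/2 * ϱ t x * ‖u t x‖ ^ 2 + ε⁻¹ * ε⁻¹ * Hfun p ϱb (ϱ t x)))
      + ∫ s in Ioc 0 t, ∫ x in Dom F m s,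
          mdd (Stens μ η (gradm (u s) x)) (gradm (u s) x))
    ≤ (∫ x in Dom F m 0, ((1:ℝ)/2 * ϱ0 x * ‖u0 x‖ ^ 2 + ε⁻¹ * ε⁻¹ * Hfun p ϱb (ϱ0 x)))
      + (∫ x in Dom F m t, ϱ t x * ⟪u t x, V t x⟫)
      - (∫ x in Dom F m 0, ϱ0 x * ⟪u0 x, V 0 x⟫)
      + ∫ s in Ioc 0 t, ∫ x in Dom F m s,
          (mdd (Stens μ η (gradm (u s) x)) (gradm (V s) x)
           - ϱ s x * mdd (tens (u s x) (u s x)) (gradm (V s) x)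
           - ϱ s x * ⟪u s x, deriv (fun τ => V τ x) s⟫)

/-- the essential set `{ϱ̄/2 < ϱ < 2ϱ̄}` -/
def essSet (ϱb : ℝ) (ρ : E3 → ℝ) : Set E3 := {x | ϱb / 2 < ρ x ∧ ρ x < 2 * ϱb}

/-- essential part of a function -/
def essPart (ϱb : ℝ) (ρ f : E3 → ℝ) : E3 → ℝ := (essSet ϱb ρ).indicator f

/-- residual part of a function -/
def resPart (ϱb : ℝ) (ρ f : E3 → ℝ) : E3 → ℝ := f - essPart ϱb ρ f


section Smoothing

/-- differentiation under an integral over `[0,1]` -/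
theorem paramInt_hasFDerivAt {X Y : Type*} [NormedAddCommGroup X] [NormedSpace ℝ X]
    [FiniteDimensional ℝ X] [NormedAddCommGroup Y] [NormedSpace ℝ Y]
    (g : X → ℝ → Y) (g' : X → ℝ → X →L[ℝ] Y) (hg : Continuous ↿g) (hg' : Continuous ↿g')
    (hd : ∀ y p, HasFDerivAt (fun p => g p y) (g' p y) p) (p : X) :
    HasFDerivAt (fun p => ∫ y in (0:ℝ)..1, g p y) (∫ y in (0:ℝ)..1, g' p y) p := by
  have : ProperSpace X := FiniteDimensional.proper ℝ X
  have hK : IsCompact (Metric.closedBall p 1 ×ˢ Icc (0:ℝ) 1) :=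
    (isCompact_closedBall p 1).prod isCompact_Icc
  obtain ⟨C, hC⟩ := hK.exists_bound_of_continuousOn hg'.continuousOn
  refine intervalIntegral.hasFDerivAt_integral_of_dominated_of_fderiv_le
    (F := g) (F' := g') (bound := fun _ => C) (Metric.closedBall_mem_nhds p one_pos) ?_ ?_ ?_ ?_ ?_ ?_
  · refine Eventually.of_forall fun q => ?_
    exact (hg.comp (by fun_prop : Continuous fun y : ℝ => (q, y))).aestronglyMeasurable
  · exact (hg.comp (by fun_prop : Continuous fun y : ℝ => (p, y))).intervalIntegrable _ _
  · exact (hg'.comp (by fun_prop : Continuous fun y : ℝ => (p, y))).aestronglyMeasurable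
  · refine Eventually.of_forall fun y hy x hx => ?_
    rw [uIoc_of_le zero_le_one] at hy
    exact hC (x, y) ⟨hx, hy.1.le, hy.2⟩
  · exact intervalIntegrable_const
  · exact Eventually.of_forall fun y hy x hx => hd y x

/-- the shear `(s,x) ↦ (s, x + y s v)` -/
def shear (v : E3) (y : ℝ) : (ℝ × E3) →L[ℝ] (ℝ × E3) :=
  ContinuousLinearMap.id ℝ (ℝ × E3) +
    y • (ContinuousLinearMap.fst ℝ ℝ E3).smulRight ((0, v) : ℝ × E3)

theorem shear_apply (v : E3) (y : ℝ) (p : ℝ × E3) :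
    shear v y p = p + y • p.1 • ((0, v) : ℝ × E3) := by
  simp [shear]

theorem shear_fst (v : E3) (y : ℝ) (p : ℝ × E3) : (shear v y p).1 = p.1 := by
  simp [shear_apply]

theorem shear_continuous (v : E3) : Continuous fun q : (ℝ × E3) × ℝ => shear v q.2 q.1 := by
  simp only [shear_apply]; fun_prop

theorem shear_continuous' (v : E3) : Continuous fun y : ℝ => shear v y := by
  unfold shear; fun_prop

/-- directional average at scale `s` -/
def avg (v : E3) (f : ℝ × E3 → E3) (p : ℝ × E3) : E3 :=
  ∫ y in (0:ℝ)..1, f (shear v y p)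

theorem avg_hasFDerivAt (v : E3) {f : ℝ × E3 → E3} (hf : ContDiff ℝ 1 f) (p : ℝ × E3) :
    HasFDerivAt (avg v f) (∫ y in (0:ℝ)..1, (fderiv ℝ f (shear v y p)).comp (shear v y)) p := by
  refine paramInt_hasFDerivAt (fun p y => f (shear v y p))
    (fun p y => (fderiv ℝ f (shear v y p)).comp (shear v y)) ?_ ?_ ?_ p
  · exact hf.continuous.comp (shear_continuous v)
  · exact ((hf.continuous_fderiv one_ne_zero).comp (shear_continuous v)).clm_comp
      ((shear_continuous' v).comp continuous_snd)
  · intro y p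
    exact ((hf.differentiable one_ne_zero) _).hasFDerivAt.comp p (shear v y).hasFDerivAt

theorem avg_integrand_continuous (v : E3) {f : ℝ × E3 → E3} (hf : ContDiff ℝ 1 f) :
    Continuous ↿(fun (p : ℝ × E3) (y : ℝ) => (fderiv ℝ f (shear v y p)).comp (shear v y)) :=
  ((hf.continuous_fderiv one_ne_zero).comp (shear_continuous v)).clm_comp
      ((shear_continuous' v).comp continuous_snd)

theorem avg_contDiff (v : E3) {f : ℝ × E3 → E3} (hf : ContDiff ℝ 1 f) :
    ContDiff ℝ 1 (avg v f) := by
  rw [contDiff_one_iff_hasFDerivAt]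
  refine ⟨_, ?_, avg_hasFDerivAt v hf⟩
  exact intervalIntegral.continuous_parametric_intervalIntegral_of_continuous'
    (avg_integrand_continuous v hf) 0 1

/-- `s ∂_ω f` -/
def sdir (ω : ℝ × E3) (f : ℝ × E3 → E3) (p : ℝ × E3) : E3 := p.1 • fderiv ℝ f p ω

theorem shear_hasDerivAt (v : E3) {f : ℝ × E3 → E3} (hf : ContDiff ℝ 1 f) (p : ℝ × E3) (y : ℝ) :
    HasDerivAt (fun y => f (shear v y p)) (sdir (0, v) f (shear v y p)) y := by
  have h1 : HasDerivAt (fun y : ℝ => shear v y p) (p.1 • ((0, v) : ℝ × E3)) y := by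
    simp only [shear_apply]
    simpa using ((hasDerivAt_id y).smul_const (p.1 • ((0, v) : ℝ × E3))).const_add p
  have h2 := ((hf.differentiable one_ne_zero) (shear v y p)).hasFDerivAt.comp_hasDerivAt y h1
  rw [map_smul] at h2
  unfold sdir
  rw [shear_fst]
  exact h2

theorem sdir_continuous (ω : ℝ × E3) {f : ℝ × E3 → E3} (hf : ContDiff ℝ 1 f) :
    Continuous (sdir ω f) :=
  continuous_fst.smul ((hf.continuous_fderiv one_ne_zero).clm_apply continuous_const)

theorem shear_cont_y (v : E3) (p : ℝ × E3) : Continuous fun y : ℝ => shear v y p :=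
  (shear_continuous v).comp (by fun_prop : Continuous fun y : ℝ => (p, y))

theorem int_sdir_v (v : E3) {f : ℝ × E3 → E3} (hf : ContDiff ℝ 1 f) (p : ℝ × E3) :
    ∫ y in (0:ℝ)..1, sdir (0, v) f (shear v y p) = f (shear v 1 p) - f p := by
  rw [intervalIntegral.integral_eq_sub_of_hasDerivAt (fun y _ => shear_hasDerivAt v hf p y)]
  · simp [shear_apply v 0]
  · exact ((sdir_continuous _ hf).comp (shear_cont_y v p)).intervalIntegrable _ _

theorem int_y_sdir_v (v : E3) {f : ℝ × E3 → E3} (hf : ContDiff ℝ 1 f) (p : ℝ × E3) :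
    ∫ y in (0:ℝ)..1, y • sdir (0, v) f (shear v y p) = f (shear v 1 p) - avg v f p := by
  have h : ∀ y : ℝ, HasDerivAt (fun y : ℝ => y • f (shear v y p))
      (y • sdir (0, v) f (shear v y p) + f (shear v y p)) y := by
    intro y
    have h1 := (hasDerivAt_id y).smul (shear_hasDerivAt v hf p y)
    simp only [id, one_smul] at h1
    exact h1
  have c1 : Continuous fun y : ℝ => y • sdir (0, v) f (shear v y p) :=
    continuous_id.smul ((sdir_continuous _ hf).comp (shear_cont_y v p))
  have c2 : Continuous fun y : ℝ => f (shear v y p) := hf.continuous.comp (shear_cont_y v p)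
  have := intervalIntegral.integral_eq_sub_of_hasDerivAt (a := 0) (b := 1) (fun y _ => h y)
    ((c1.add c2).intervalIntegrable _ _)
  rw [intervalIntegral.integral_add (c1.intervalIntegrable _ _) (c2.intervalIntegrable _ _)] at this
  rw [eq_sub_iff_add_eq]
  simpa [avg] using this

theorem sdir_avg (v : E3) (ω : ℝ × E3) {f : ℝ × E3 → E3} (hf : ContDiff ℝ 1 f) :
    sdir ω (avg v f) = fun p => avg v (sdir ω f) p + ω.1 • (f (shear v 1 p) - avg v f p) := by
  funext p
  have c1 : Continuous fun y : ℝ => sdir ω f (shear v y p) :=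
    (sdir_continuous _ hf).comp (shear_cont_y v p)
  have c2 : Continuous fun y : ℝ => ω.1 • y • sdir (0, v) f (shear v y p) := by
    have c3 : Continuous fun y : ℝ => sdir (0, v) f (shear v y p) :=
      (sdir_continuous _ hf).comp (shear_cont_y v p)
    exact (continuous_id.smul c3).const_smul ω.1
  rw [← int_y_sdir_v v hf, ← intervalIntegral.integral_smul]
  change p.1 • fderiv ℝ (avg v f) p ω = (∫ y in (0:ℝ)..1, sdir ω f (shear v y p)) + _
  rw [(avg_hasFDerivAt v hf p).fderiv, ContinuousLinearMap.intervalIntegral_apply,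
    ← intervalIntegral.integral_smul]
  · rw [← intervalIntegral.integral_add (c1.intervalIntegrable _ _) (c2.intervalIntegrable _ _)]
    refine intervalIntegral.integral_congr fun y _ => ?_
    simp only [ContinuousLinearMap.comp_apply, shear_fst, sdir]
    rw [shear_apply v y ω, map_add, map_smul, map_smul, smul_add]
    congr 1
    simp only [smul_smul]
    congr 1
    ring
  · exact ((avg_integrand_continuous v hf).comp
      (by fun_prop : Continuous fun y : ℝ => (p, y))).intervalIntegrable _ _

theorem sdir_avg_self (v : E3) {f : ℝ × E3 → E3} (hf : ContDiff ℝ 1 f) :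
    sdir (0, v) (avg v f) = fun p => f (shear v 1 p) - f p := by
  rw [sdir_avg v _ hf]
  funext p
  simp only [zero_smul, add_zero]
  exact int_sdir_v v hf p

theorem sdir_avg_contDiff (v : E3) (ω : ℝ × E3) {f : ℝ × E3 → E3} (hf : ContDiff ℝ 1 f)
    (h : ContDiff ℝ 1 (sdir ω f)) : ContDiff ℝ 1 (sdir ω (avg v f)) := by
  rw [sdir_avg v ω hf]
  exact (avg_contDiff v h).add
    (((hf.comp (shear v 1).contDiff).sub (avg_contDiff v hf)).const_smul _)

theorem sdir_avg_self_contDiff (v : E3) {f : ℝ × E3 → E3} (hf : ContDiff ℝ 1 f) :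
    ContDiff ℝ 1 (sdir (0, v) (avg v f)) := by
  rw [sdir_avg_self v hf]
  exact (hf.comp (shear v 1).contDiff).sub hf

theorem avg_at_zero (v : E3) (f : ℝ × E3 → E3) (x : E3) : avg v f (0, x) = f (0, x) := by
  simp [avg, shear_apply]

/-- the scale-dependent regularisation -/
theorem smoothing (u : E3 → E3) (hu : ContDiff ℝ 1 u) :
    ∃ G : ℝ × E3 → E3, ContDiff ℝ 2 G ∧
      ∀ x, HasFDerivAt G ((ContinuousLinearMap.fst ℝ ℝ E3).smulRight (u x)) (0, x) := by
  set f0 : ℝ × E3 → E3 := fun p => u p.2 with hf0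
  set f1 := avg (e3 0) f0 with hf1
  set f2 := avg (e3 1) f1 with hf2
  set f3 := avg (e3 2) f2 with hf3
  have c0 : ContDiff ℝ 1 f0 := hu.comp contDiff_snd
  have c1 : ContDiff ℝ 1 f1 := avg_contDiff _ c0
  have c2 : ContDiff ℝ 1 f2 := avg_contDiff _ c1
  have c3 : ContDiff ℝ 1 f3 := avg_contDiff _ c2
  have t0 : ContDiff ℝ 1 (sdir (1, 0) f0) := by
    have : sdir (1, 0) f0 = fun _ => 0 := by
      funext p
      have := ((hu.differentiable one_ne_zero) p.2).hasFDerivAt.comp p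
        (hasFDerivAt_snd (𝕜 := ℝ) (p := p))
      have h2 : fderiv ℝ f0 p = _ := this.fderiv
      simp [sdir, h2]
    rw [this]; exact contDiff_const
  have t3 : ContDiff ℝ 1 (sdir (1, 0) f3) :=
    sdir_avg_contDiff _ _ c2 (sdir_avg_contDiff _ _ c1 (sdir_avg_contDiff _ _ c0 t0))
  have x0 : ContDiff ℝ 1 (sdir (0, e3 0) f3) :=
    sdir_avg_contDiff _ _ c2 (sdir_avg_contDiff _ _ c1 (sdir_avg_self_contDiff _ c0))
  have x1 : ContDiff ℝ 1 (sdir (0, e3 1) f3) :=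
    sdir_avg_contDiff _ _ c2 (sdir_avg_self_contDiff _ c1)
  have x2 : ContDiff ℝ 1 (sdir (0, e3 2) f3) := sdir_avg_self_contDiff _ c2
  have hz : ∀ x, f3 (0, x) = u x := by
    intro x
    simp only [hf3, hf2, hf1, avg_at_zero, hf0]
  have hd : ∀ p : ℝ × E3, HasFDerivAt (fun p : ℝ × E3 => p.1 • f3 p)
      (p.1 • fderiv ℝ f3 p + (ContinuousLinearMap.fst ℝ ℝ E3).smulRight (f3 p)) p := by
    intro p
    exact (hasFDerivAt_fst (𝕜 := ℝ) (p := p)).smul ((c3.differentiable one_ne_zero) p).hasFDerivAt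
  refine ⟨fun p => p.1 • f3 p, ?_, ?_⟩
  · rw [show (2 : WithTop ℕ∞) = 1 + 1 by norm_num, contDiff_succ_iff_fderiv_apply]
    refine ⟨fun p => (hd p).differentiableAt, by simp, fun ω => ?_⟩
    have hω : ω = ω.1 • ((1, 0) : ℝ × E3) + (ω.2 0 • ((0, e3 0) : ℝ × E3)
        + (ω.2 1 • ((0, e3 1) : ℝ × E3) + ω.2 2 • ((0, e3 2) : ℝ × E3))) := by
      refine Prod.ext (by simp) ?_
      ext i
      fin_cases i <;> simp [e3]
    have : (fun p => fderiv ℝ (fun p : ℝ × E3 => p.1 • f3 p) p ω) = fun p =>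
        ω.1 • sdir (1, 0) f3 p + (ω.2 0 • sdir (0, e3 0) f3 p
          + (ω.2 1 • sdir (0, e3 1) f3 p + ω.2 2 • sdir (0, e3 2) f3 p)) + ω.1 • f3 p := by
      funext p
      rw [(hd p).fderiv]
      simp only [add_apply, smul_apply,
        ContinuousLinearMap.smulRight_apply, ContinuousLinearMap.coe_fst', sdir]
      congr 1
      conv_lhs => rw [hω]
      simp only [map_add, map_smul, smul_add]
      simp only [smul_smul, mul_comm]
    rw [this]
    exact ((t3.const_smul _).add ((x0.const_smul _).add ((x1.const_smul _).add
      (x2.const_smul _)))).add (c3.const_smul _)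
  · intro x
    have := hd (0, x)
    rw [hz] at this
    have e : ((0, x) : ℝ × E3).1 • fderiv ℝ f3 (0, x)
        + (ContinuousLinearMap.fst ℝ ℝ E3).smulRight (u x)
        = (ContinuousLinearMap.fst ℝ ℝ E3).smulRight (u x) := by
      refine ContinuousLinearMap.ext fun h => ?_
      change (0 : ℝ) • (fderiv ℝ f3 (0, x) h) + _ = _
      rw [zero_smul, zero_add]
      rfl
    rw [e] at this
    exact this

end Smoothing

/-- coordinate functional -/
def coordL (i : Fin 3) : E3 →L[ℝ] ℝ := EuclideanSpace.proj i

theorem coordL_apply (i : Fin 3) (x : E3) : coordL i x = x i := rfl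

theorem inner_grd (F : E3 → ℝ) (x h : E3) : ⟪grd F x, h⟫ = fderiv ℝ F x h := by
  have hh : h = ∑ i, h i • e3 i := by
    ext j
    fin_cases j <;> simp [e3, Fin.sum_univ_three]
  conv_rhs => rw [hh]
  simp only [grd, pd, map_sum, map_smul, sum_inner, inner_smul_left, e3,
    EuclideanSpace.inner_single_left]
  simp [mul_comm]

theorem grd_contDiff {F : E3 → ℝ} (hF : ContDiff ℝ 2 F) : ContDiff ℝ 1 (grd F) := by
  unfold grd pd
  have h := hF.fderiv_right (m := 1) (by norm_num)
  refine ContDiff.sum fun i _ => ?_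
  exact (h.clm_apply contDiff_const).smul contDiff_const

theorem zero_subset_closure {F : E3 → ℝ} (hF : DomainHyp F) :
    {x | F x = 0} ⊆ closure {x | F x < 0} := by
  intro x hx
  by_contra hc
  have h1 : ∀ᶠ y in 𝓝 x, y ∈ (closure {x | F x < 0})ᶜ :=
    isClosed_closure.isOpen_compl.mem_nhds hc
  have hmin : IsLocalMin F x := by
    filter_upwards [h1] with y hy
    rw [show F x = 0 from hx]
    by_contra hlt
    exact hy (subset_closure (not_le.mp hlt))
  have h0 := hmin.fderiv_eq_zero
  apply hF.nondeg x hx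
  simp [grd, pd, h0]

theorem exists_Q {F : E3 → ℝ} (hF : DomainHyp F) :
    ∃ Q : E3 → E3, ContDiff ℝ 2 Q ∧ HasCompactSupport Q ∧ ∀ x, F x = 0 → ∀ h,
      fderiv ℝ Q x h = ((‖grd F x‖ ^ 2)⁻¹ * ⟪grd F x, h⟫) • grd F x - (1 / 2 : ℝ) • h := by
  have hg := grd_contDiff hF.smooth
  have hpos : ∀ x, ‖grd F x‖ ^ 2 + F x ^ 2 ≠ 0 := by
    intro x hx
    have h1 : F x = 0 := by nlinarith [sq_nonneg ‖grd F x‖, sq_nonneg (F x)]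
    have h2 : ‖grd F x‖ = 0 := by nlinarith [sq_nonneg ‖grd F x‖, sq_nonneg (F x)]
    exact hF.nondeg x h1 (norm_eq_zero.mp h2)
  have hu : ContDiff ℝ 1 fun x => (‖grd F x‖ ^ 2 + F x ^ 2)⁻¹ • grd F x :=
    (((hg.norm_sq ℝ).add ((hF.smooth.of_le (by norm_num)).pow 2)).inv hpos).smul hg
  obtain ⟨G, hG, hG'⟩ := smoothing _ hu
  obtain ⟨r, hr0, hr⟩ : ∃ r : ℝ, 0 < r ∧ ∀ x, F x = 0 → ‖x‖ < r := by
    obtain ⟨r, hr⟩ := (hF.bounded.closure).subset_ball 0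
    refine ⟨max r 1, by positivity, fun x hx => ?_⟩
    have := hr (zero_subset_closure hF hx)
    rw [mem_ball_zero_iff] at this
    exact this.trans_le (le_max_left _ _)
  let χ : ContDiffBump (0 : E3) := ⟨r, r + 1, hr0, by linarith⟩
  have hP : ContDiff ℝ 2 fun x : E3 => G (F x, x) - (1 / 2 : ℝ) • x :=
    (hG.comp (hF.smooth.prodMk contDiff_id)).sub (contDiff_id.const_smul _)
  refine ⟨fun x => χ x • (G (F x, x) - (1 / 2 : ℝ) • x), ?_, ?_, ?_⟩
  · exact χ.contDiff.smul hP
  · exact χ.hasCompactSupport.smul_right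
  · intro x hx h
    have hev : (fun x => χ x • (G (F x, x) - (1 / 2 : ℝ) • x)) =ᶠ[𝓝 x]
        fun x => G (F x, x) - (1 / 2 : ℝ) • x := by
      have : x ∈ Metric.ball (0 : E3) χ.rIn := by
        rw [mem_ball_zero_iff]; exact hr x hx
      filter_upwards [χ.eventuallyEq_one_of_mem_ball this] with y hy
      simp [hy]
    rw [hev.fderiv_eq]
    have hGx : HasFDerivAt G ((ContinuousLinearMap.fst ℝ ℝ E3).smulRight
        ((‖grd F x‖ ^ 2 + F x ^ 2)⁻¹ • grd F x)) (F x, x) := by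
      have h0 : ((F x, x) : ℝ × E3) = (0, x) := by rw [hx]
      rw [h0]
      exact hG' x
    have hFd := ((hF.smooth.differentiable (by norm_num)) x).hasFDerivAt
    have h1 := HasFDerivAt.comp (g := G) (f := fun x => (F x, x)) x hGx (hFd.prodMk (hasFDerivAt_id x))
    have h2 := h1.sub ((hasFDerivAt_id x).const_smul (1 / 2 : ℝ))
    have h3 : fderiv ℝ (fun x => G (F x, x) - (1 / 2 : ℝ) • x) x = _ := h2.fderiv
    rw [h3, inner_grd]
    simp [hx, smul_smul, mul_comm]

/-- the corrector generated by the potential `Q` -/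
def corr (Q : E3 → E3) (c : E3) (z : E3) : E3 :=
  fderiv ℝ Q z c - (∑ i, fderiv ℝ Q z (e3 i) i) • c

theorem euclid_sum (h : E3) : ∑ i, h i • e3 i = h := by
  ext j
  fin_cases j <;> simp [e3, Fin.sum_univ_three]

theorem coord_contDiff {X : Type*} [NormedAddCommGroup X] [NormedSpace ℝ X] {f : X → E3}
    (hf : ContDiff ℝ 1 f) (i : Fin 3) : ContDiff ℝ 1 fun x => f x i :=
  (coordL i).contDiff.comp hf

theorem corr_contDiff {X : Type*} [NormedAddCommGroup X] [NormedSpace ℝ X] {Q : E3 → E3}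
    (hQ : ContDiff ℝ 2 Q) {c z : X → E3} (hc : ContDiff ℝ 1 c) (hz : ContDiff ℝ 1 z) :
    ContDiff ℝ 1 fun x => corr Q (c x) (z x) := by
  have h : ContDiff ℝ 1 fun x => fderiv ℝ Q (z x) :=
    (hQ.fderiv_right (m := 1) (by norm_num)).comp hz
  unfold corr
  have h2 : ContDiff ℝ 1 fun x => ∑ i, fderiv ℝ Q (z x) (e3 i) i :=
    ContDiff.sum fun i _ => coord_contDiff (h.clm_apply contDiff_const) i
  exact (h.clm_apply hc).sub (h2.smul hc)

theorem corr_dvg {Q : E3 → E3} (hQ : ContDiff ℝ 2 Q) (c a x : E3) :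
    dvg (fun x => corr Q c (x - a)) x = 0 := by
  have hD : HasFDerivAt (fderiv ℝ Q) (fderiv ℝ (fderiv ℝ Q) (x - a)) (x - a) :=
    (((hQ.fderiv_right (m := 1) (by norm_num)).differentiable one_ne_zero) _).hasFDerivAt
  have hsymm : IsSymmSndFDerivAt ℝ Q (x - a) :=
    hQ.contDiffAt.isSymmSndFDerivAt (by simp)
  set S := fderiv ℝ (fderiv ℝ Q) (x - a) with hS
  have hD' : HasFDerivAt (fun x => fderiv ℝ Q (x - a)) S x := by
    exact hD.comp x ((hasFDerivAt_id x).sub_const a)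
  have hap : ∀ w : E3, HasFDerivAt (fun x => fderiv ℝ Q (x - a) w) (S.flip w) x := by
    intro w
    have := (ContinuousLinearMap.apply ℝ E3 w).hasFDerivAt.comp x hD'
    exact this
  have htr : HasFDerivAt (fun x => ∑ i, fderiv ℝ Q (x - a) (e3 i) i)
      (∑ i, (coordL i).comp (S.flip (e3 i))) x := by
    refine HasFDerivAt.fun_sum fun i _ => ?_
    exact (coordL i).hasFDerivAt.comp x (hap (e3 i))
  have hV : HasFDerivAt (fun x => corr Q c (x - a)) _ x := (hap c).sub (htr.smul_const c)
  unfold dvg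
  rw [hV.fderiv]
  have e1 : ∀ i, S c (e3 i) i = ∑ j, c j * S (e3 j) (e3 i) i := by
    intro i
    conv_lhs => rw [← euclid_sum c]
    simp [Fin.sum_univ_three]
  have e2 : ∀ j, S (e3 j) c j = S c (e3 j) j := fun j => by rw [hsymm (e3 j) c]
  simp only [sub_apply, ContinuousLinearMap.flip_apply,
    ContinuousLinearMap.smulRight_apply, ContinuousLinearMap.comp_apply, PiLp.sub_apply,
    PiLp.smul_apply, coordL_apply, smul_eq_mul, e2, e1, sum_apply]
  simp only [Fin.sum_univ_three]
  ring

theorem corr_bc {F : E3 → ℝ} {Q : E3 → E3} (c z : E3) (hne : grd F z ≠ 0)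
    (h : ∀ h, fderiv ℝ Q z h
      = ((‖grd F z‖ ^ 2)⁻¹ * ⟪grd F z, h⟫) • grd F z - (1 / 2 : ℝ) • h) :
    corr Q c z = ⟪c, -(‖grd F z‖⁻¹ • grd F z)⟫ • (-(‖grd F z‖⁻¹ • grd F z)) := by
  have hn : ‖grd F z‖ ^ 2 ≠ 0 := pow_ne_zero 2 (norm_ne_zero_iff.mpr hne)
  have htr : ∑ i, fderiv ℝ Q z (e3 i) i = -(1 / 2) := by
    have h1 : ∀ i, fderiv ℝ Q z (e3 i) i = (‖grd F z‖ ^ 2)⁻¹ * (grd F z i) ^ 2 - 1 / 2 := by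
      intro i
      rw [h]
      simp [e3, EuclideanSpace.inner_single_right]
      ring
    simp only [h1, Finset.sum_sub_distrib, ← Finset.mul_sum]
    rw [← EuclideanSpace.real_norm_sq_eq, inv_mul_cancel₀ hn]
    norm_num
  unfold corr
  rw [htr, h, real_inner_comm]
  simp only [inner_neg_right, inner_smul_right, smul_neg, neg_smul, smul_smul,
    sub_neg_eq_add, sub_add_cancel]
  rw [← neg_smul, ← inv_pow]
  congr 1
  ring


/-- Lemma 2.1: existence of a solenoidal corrector field `V`,
compactly supported, divergence free on `Ω_t`, matching the normal boundary velocity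
`-ν_t n = (m'(t)·n) n` of the translating body. -/
theorem stmt0 (T : ℝ) (hT : 0 < T) (m : ℝ → E3) (hm : ContDiff ℝ 2 m) (hm0 : m 0 = 0)
    (F : E3 → ℝ) (hF : DomainHyp F) :
    ∃ R : ℝ, 0 < R ∧ ∃ V : ℝ → E3 → E3, IsCorrector T m F R V := by
  obtain ⟨Q, hQ, hQc, hQb⟩ := exists_Q hF
  obtain ⟨M, hM⟩ := (isCompact_Icc (a := (0:ℝ)) (b := T)).exists_bound_of_continuousOn
    hm.continuous.continuousOn
  obtain ⟨r, hr⟩ := hQc.isCompact.isBounded.subset_closedBall 0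
  have hm' : ContDiff ℝ 1 (deriv m) := by
    have := (contDiff_succ_iff_deriv (n := 1) (f := m)).mp (by norm_num; exact hm)
    exact this.2.2
  have hsupp : ∀ t ∈ Icc 0 T, ∀ x : E3, max (r + M) 1 < ‖x‖ → corr Q (deriv m t) (x - m t) = 0 := by
    intro t ht x hx
    have h1 : x - m t ∉ tsupport Q := by
      intro hmem
      have h2 := hr hmem
      rw [mem_closedBall_zero_iff] at h2
      have h3 := hM t ht
      have h4 : ‖x‖ ≤ ‖x - m t‖ + ‖m t‖ := by
        simpa using norm_add_le (x - m t) (m t)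
      have h5 := le_max_left (r + M) 1
      linarith
    have h0 : fderiv ℝ Q (x - m t) = 0 := fderiv_of_notMem_tsupport (𝕜 := ℝ) h1
    simp [corr, h0]
  refine ⟨max (r + M) 1, by positivity, fun t x => corr Q (deriv m t) (x - m t), ?_⟩
  refine ⟨?_, ?_, ?_, ?_, hsupp⟩
  · exact corr_contDiff hQ (hm'.comp contDiff_fst)
      (contDiff_snd.sub ((hm.of_le (by norm_num)).comp contDiff_fst))
  · intro t ht
    have hc : ContDiff ℝ 1 fun x => corr Q (deriv m t) (x - m t) :=
      corr_contDiff hQ contDiff_const (contDiff_id.sub contDiff_const)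
    have hs : HasCompactSupport fun x => corr Q (deriv m t) (x - m t) := by
      refine HasCompactSupport.intro (isCompact_closedBall (0 : E3) (max (r + M) 1)) fun x hx => ?_
      rw [mem_closedBall_zero_iff, not_le] at hx
      exact hsupp t ht x hx
    have hgc : ∀ i j, Continuous fun x =>
        gradm (fun x => corr Q (deriv m t) (x - m t)) x i j := by
      intro i j
      exact (coordL i).continuous.comp
        ((hc.continuous_fderiv one_ne_zero).clm_apply continuous_const)
    have hgs : ∀ i j, HasCompactSupport fun x =>
        gradm (fun x => corr Q (deriv m t) (x - m t)) x i j := by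
      intro i j
      exact (hs.fderiv (𝕜 := ℝ)).comp_left (g := fun L : E3 →L[ℝ] E3 => L (e3 j) i) (by simp)
    refine ⟨?_, ?_, ?_, ?_⟩
    · exact (hc.continuous.memLp_of_hasCompactSupport hs).2
    · exact fun i j => ((hgc i j).memLp_of_hasCompactSupport (hgs i j)).2
    · exact (hc.continuous.memLp_of_hasCompactSupport hs).2
    · exact fun i j => ((hgc i j).memLp_of_hasCompactSupport (hgs i j)).2
  · intro t _ x _
    exact corr_dvg hQ _ _ _
  · intro t _ x hx
    exact corr_bc _ _ (hF.nondeg _ hx) (hQb _ hx)
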